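/- arXiv:2002.05855 — 2 statements merged into one kernel-verified Lean document; each statement's English description precedes it below -/
import Mathlib

section
/- Let u ≤ w in S_n and let 1 ≤ i < k ≤ n. If (u(i),u(k)) ∈ E_w(u)^+, then there is no j with i < j < k and u(i) < u(j) < u(k). Similarly, if (u(i),u(k)) ∈ E_w(u)^−, then there is no j with i < j < k and u(i) > u(j) > u(k). -/
open Equiv

/-- The length (number of inversions) of a permutation of `Fin n`. -/
def invLen {n : ℕ} (u : Equiv.Perm (Fin n)) : ℕ :=
  (Finset.univ.filter (fun p : Fin n × Fin n => p.1 < p.2 ∧ u p.2 < u p.1)).card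

/-- A permutation is a transposition if it swaps two distinct elements. -/
def IsTransposition {n : ℕ} (σ : Equiv.Perm (Fin n)) : Prop :=
  ∃ a b : Fin n, a ≠ b ∧ σ = Equiv.swap a b

/-- Bruhat order on permutations: `v ≤ w` iff `w` is obtained from `v` by left
multiplication by transpositions, each strictly increasing the length. -/
def BruhatLE {n : ℕ} (v w : Equiv.Perm (Fin n)) : Prop :=
  ∃ (m : ℕ) (c : ℕ → Equiv.Perm (Fin n)),
    c 0 = v ∧ c m = w ∧
    ∀ k, k < m →
      (∃ τ : Equiv.Perm (Fin n), IsTransposition τ ∧ c (k + 1) = τ * c k) ∧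
      invLen (c k) < invLen (c (k + 1))

/-- The edge set `Ẽ_w(u)`. -/
def Etilde {n : ℕ} (w u : Equiv.Perm (Fin n)) : Set (Fin n × Fin n) :=
  { p | ∃ i j : Fin n, i < j ∧ p = (u i, u j) ∧
      BruhatLE (Equiv.swap (u i) (u j) * u) w ∧
      |(invLen (Equiv.swap (u i) (u j) * u) : ℤ) - (invLen u : ℤ)| = 1 }

/-- The transitive reduction `E_w(u)` of `Ẽ_w(u)`: edges `(a,b)` of `Ẽ_w(u)` such that
there is no directed path from `a` to `b` in `Ẽ_w(u)` using at least two edges. -/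
def Ered {n : ℕ} (w u : Equiv.Perm (Fin n)) : Set (Fin n × Fin n) :=
  { p | p ∈ Etilde w u ∧
      ¬ ∃ c : Fin n, (p.1, c) ∈ Etilde w u ∧
        Relation.TransGen (fun a b : Fin n => (a, b) ∈ Etilde w u) c p.2 }

/-- `E_w(u)^+`: edges `(a,b)` of `E_w(u)` with `a < b`. -/
def Eplus {n : ℕ} (w u : Equiv.Perm (Fin n)) : Set (Fin n × Fin n) :=
  { p ∈ Ered w u | p.1 < p.2 }

/-- `E_w(u)^-`: edges `(a,b)` of `E_w(u)` with `a > b`. -/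
def Eminus {n : ℕ} (w u : Equiv.Perm (Fin n)) : Set (Fin n × Fin n) :=
  { p ∈ Ered w u | p.2 < p.1 }

/-- The moment-map image `μ(u) = (u⁻¹(1), …, u⁻¹(n)) ∈ ℝⁿ`
(using values `1, …, n`, i.e. `Fin.val + 1`). -/
def mu {n : ℕ} (u : Equiv.Perm (Fin n)) : Fin n → ℝ :=
  fun k => ((u⁻¹ k : ℕ) : ℝ) + 1

/-- The standard basis vector `e_a` of `ℝⁿ`. -/
def stdB {n : ℕ} (a : Fin n) : Fin n → ℝ :=
  fun k => if k = a then 1 else 0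

/-!
Exchanging the values of an injective map `f` at positions `i < k` permutes the pairs of positions
whose order the transposition of `i` and `k` preserves, and carries inversions to inversions there.
The remaining pairs are `(i, k)`, `(i, j)` and `(j, k)` for `i < j < k`; if `f i < f k`, every
inversion among them survives, and the new ones are `(i, k)` together with `(i, j)` and `(j, k)`
for each `j` with `f i < f j < f k`. So the length changes by exactly `1 + 2 m`, where `m` counts
these `j`, and a change of length by one already forces `m = 0`.
-/

open Finset Function

section Inversions

variable {α β : Type*} [LinearOrder α] [LinearOrder β] {f : α → β} {i k : α}

lemma not_swap_lt_swap_iff {a b : α} (hik : i < k) (hab : a < b) :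
    ¬ swap i k a < swap i k b ↔ a = i ∧ b ≤ k ∨ i ≤ a ∧ b = k := by
  grind

variable [Fintype α]

/-- The inversions of a map between linear orders, as pairs of positions in increasing order;
for a permutation `u` of `Fin n`, `invLen u` is their number. -/
def inversions (f : α → β) : Finset (α × α) :=
  {p | p.1 < p.2 ∧ f p.2 < f p.1}

lemma mem_inversions {a b : α} : (a, b) ∈ inversions f ↔ a < b ∧ f b < f a := by
  simp [inversions]

lemma card_filter_lt_inversions_comp (f : α → β) (σ : Perm α) :
    #{p ∈ inversions (f ∘ σ) | σ p.1 < σ p.2} =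
      #{p ∈ inversions f | σ.symm p.1 < σ.symm p.2} :=
  card_equiv (σ.prodCongr σ) fun ⟨a, b⟩ ↦ by
    simp only [mem_filter, mem_inversions, comp_apply, prodCongr_apply, Prod.map_apply,
      symm_apply_apply]
    tauto

/-- The positions strictly between `i` and `k` at which `f` takes a value strictly between `f i`
and `f k`, whichever of the two is larger. -/
def positionsBetween (f : α → β) (i k : α) : Finset α :=
  {j | i < j ∧ j < k ∧ min (f i) (f k) < f j ∧ f j < max (f i) (f k)}

lemma mem_positionsBetween {j : α} : j ∈ positionsBetween f i k ↔
    i < j ∧ j < k ∧ min (f i) (f k) < f j ∧ f j < max (f i) (f k) := by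
  simp [positionsBetween]

lemma positionsBetween_comp_swap :
    positionsBetween (f ∘ swap i k) i k = positionsBetween f i k := by
  ext j
  simp only [mem_positionsBetween, comp_apply, swap_apply_left, swap_apply_right, min_comm (f k),
    max_comm (f k)]
  refine and_congr_right fun hij ↦ and_congr_right fun hjk ↦ ?_
  rw [swap_apply_of_ne_of_ne hij.ne' hjk.ne]

lemma mem_inversions_comp_swap_left {j : α} (hf : Injective f) (h : f i < f k) (hij : i < j)
    (hjk : j < k) : (i, j) ∈ inversions (f ∘ swap i k) ↔
      (i, j) ∈ inversions f ∨ j ∈ positionsBetween f i k := by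
  have hne : f j < f i ∨ f i < f j := (hf.ne hij.ne').lt_or_gt
  simp only [mem_inversions, mem_positionsBetween, comp_apply, swap_apply_left,
    swap_apply_of_ne_of_ne hij.ne' hjk.ne, min_eq_left h.le, max_eq_right h.le]
  grind

lemma mem_inversions_comp_swap_right {j : α} (hf : Injective f) (h : f i < f k) (hij : i < j)
    (hjk : j < k) : (j, k) ∈ inversions (f ∘ swap i k) ↔
      (j, k) ∈ inversions f ∨ j ∈ positionsBetween f i k := by
  have hne : f j < f k ∨ f k < f j := (hf.ne hjk.ne).lt_or_gt
  simp only [mem_inversions, mem_positionsBetween, comp_apply, swap_apply_right,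
    swap_apply_of_ne_of_ne hij.ne' hjk.ne, min_eq_left h.le, max_eq_right h.le]
  grind

/-- The inversions created by exchanging the values of `f` at positions `i < k` with `f i < f k`. -/
def newInversions (f : α → β) (i k : α) : Finset (α × α) :=
  insert (i, k) ({i} ×ˢ positionsBetween f i k ∪ positionsBetween f i k ×ˢ {k})

lemma mem_newInversions {a b : α} : (a, b) ∈ newInversions f i k ↔
    a = i ∧ b = k ∨ a = i ∧ b ∈ positionsBetween f i k ∨ a ∈ positionsBetween f i k ∧ b = k := by
  grind [newInversions]

lemma filter_not_lt_inversions_comp_swap (hf : Injective f) (hik : i < k) (h : f i < f k) :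
    {p ∈ inversions (f ∘ swap i k) | ¬ swap i k p.1 < swap i k p.2} =
      {p ∈ inversions f | ¬ swap i k p.1 < swap i k p.2} ∪ newInversions f i k := by
  ext ⟨a, b⟩
  by_cases hab : a < b
  · simp only [mem_filter, mem_union, mem_newInversions, not_swap_lt_swap_iff hik hab]
    by_cases hflip : a = i ∧ b ≤ k ∨ i ≤ a ∧ b = k
    · rcases hflip with ⟨rfl, hbk⟩ | ⟨hia, rfl⟩
      · rcases hbk.eq_or_lt with rfl | hbk
        · simp [mem_inversions, hab, h]
        · grind [mem_inversions_comp_swap_left, mem_positionsBetween]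
      · rcases hia.eq_or_lt with rfl | hia
        · simp [mem_inversions, hab, h]
        · grind [mem_inversions_comp_swap_right, mem_positionsBetween]
    · grind [mem_positionsBetween]
  · grind [mem_newInversions, mem_inversions, mem_positionsBetween]

lemma card_newInversions :
    #(newInversions f i k) = 1 + 2 * #(positionsBetween f i k) := by
  rw [newInversions, card_insert_of_notMem, card_union_of_disjoint, card_product, card_product,
    card_singleton, card_singleton]
  · ring
  · grind [disjoint_left, mem_positionsBetween]
  · grind [mem_positionsBetween]

theorem card_inversions_comp_swap (hf : Injective f) (hik : i < k) (h : f i < f k) :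
    #(inversions (f ∘ swap i k)) =
      #(inversions f) + (1 + 2 * #(positionsBetween f i k)) := by
  have hdisj : Disjoint {p ∈ inversions f | ¬ swap i k p.1 < swap i k p.2}
      (newInversions f i k) := by
    grind [disjoint_left, mem_newInversions, mem_inversions, mem_positionsBetween]
  rw [← card_filter_add_card_filter_not (s := inversions (f ∘ swap i k))
      (fun p ↦ swap i k p.1 < swap i k p.2),
    card_filter_lt_inversions_comp, symm_swap, filter_not_lt_inversions_comp_swap hf hik h,
    card_union_of_disjoint hdisj, card_newInversions, ← add_assoc,
    card_filter_add_card_filter_not]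

theorem abs_card_inversions_comp_swap_sub (hf : Injective f) (hik : i < k) :
    |(#(inversions (f ∘ swap i k)) : ℤ) - #(inversions f)| =
      1 + 2 * #(positionsBetween f i k) := by
  wlog h : f i < f k generalizing f
  · have hki : f k < f i := (hf.ne hik.ne').lt_of_le (not_lt.mp h)
    have key := this (hf.comp (swap i k).injective) (by simpa using hki)
    rwa [positionsBetween_comp_swap, comp_assoc, ← Perm.coe_mul, swap_mul_self, Perm.coe_one,
      comp_id, abs_sub_comm] at key
  rw [card_inversions_comp_swap hf hik h, Nat.cast_add, add_sub_cancel_left, Nat.abs_cast]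
  norm_cast

end Inversions

theorem abs_invLen_swap_mul_sub {n : ℕ} (u : Perm (Fin n)) {i k : Fin n} (hik : i < k) :
    |(invLen (swap (u i) (u k) * u) : ℤ) - invLen u| = 1 + 2 * #(positionsBetween u i k) := by
  rw [← mul_swap_eq_swap_mul]
  exact abs_card_inversions_comp_swap_sub u.injective hik

theorem stmt2_general {n : ℕ} {u : Perm (Fin n)} {i k : Fin n}
    (h : |(invLen (swap (u i) (u k) * u) : ℤ) - invLen u| = 1) :
    (¬ ∃ j, i < j ∧ j < k ∧ u i < u j ∧ u j < u k) ∧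
      ¬ ∃ j, i < j ∧ j < k ∧ u j < u i ∧ u k < u j := by
  have notMem (j : Fin n) (hij : i < j) (hjk : j < k) : j ∉ positionsBetween u i k := by
    have : #(positionsBetween u i k) = 0 := by
      rw [abs_invLen_swap_mul_sub u (hij.trans hjk)] at h
      lia
    exact card_eq_zero.mp this ▸ notMem_empty j
  grind [mem_positionsBetween]

lemma abs_invLen_swap_mul_sub_of_mem_Etilde {n : ℕ} {w u : Perm (Fin n)} {a b : Fin n}
    (h : (a, b) ∈ Etilde w u) : |(invLen (swap a b * u) : ℤ) - invLen u| = 1 := by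
  obtain ⟨i, j, -, hab, -, hlen⟩ := h
  simp_all

theorem stmt2 {n : ℕ} (hn : 1 ≤ n) (w u : Equiv.Perm (Fin n)) (hle : BruhatLE u w)
    (i k : Fin n) (hik : i < k) :
    (((u i, u k) : Fin n × Fin n) ∈ Eplus w u →
      ¬ ∃ j : Fin n, i < j ∧ j < k ∧ u i < u j ∧ u j < u k) ∧
    (((u i, u k) : Fin n × Fin n) ∈ Eminus w u →
      ¬ ∃ j : Fin n, i < j ∧ j < k ∧ u j < u i ∧ u k < u j) := by
  have no_between (h : (u i, u k) ∈ Etilde w u) :=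
    stmt2_general (abs_invLen_swap_mul_sub_of_mem_Etilde h)
  exact ⟨fun h ↦ (no_between h.1.1).1, fun h ↦ (no_between h.1.1).2⟩
end

section
/- Let u ≤ w in S_n. If (a,b) ∈ E_w(u)^+ and (a,c) ∈ E_w(u)^+, then b = c. Similarly, if (a,c) ∈ E_w(u)^+ and (b,c) ∈ E_w(u)^+, then a = b. -/
open Equiv

/-
The edges of `Ẽ_w(u)` record the `t * u ≤ w` that cover `u` or are covered by `u`. If the rectangle
spanned by an inversion `i < j`, `u j < u i` contains no point of the graph of `u` in its interior,
then exchanging the two values gives a permutation covered by `u`, hence below `w`. Cutting an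
arbitrary inversion at interior points shows that `u i` is always joined to `u j` by a directed
path. Now let `a → b` and `a → c` be ascending edges with `b < c`. The position of `b` cannot lie
between those of `a` and `c`, since the edge `a → c` is a cover; so `c` stands to the left of `b`,
and the path `a → c → ⋯ → b` makes `a → b` redundant. A common target is treated symmetrically.
-/

open Finset

section Inversions

variable {α β : Type*} [LinearOrder α] [LinearOrder β] {f : α → β} {i j k : α}

/-- The indicator of the pair of positions `(p, q)` being an inversion of `f`. -/
def inversionIndicator (f : α → β) (p q : α) : ℕ :=
  if p < q ∧ f q < f p then 1 else 0

/-- The number of inversions of `f`; for a permutation of `Fin n` this is its length. -/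
def inversionCount [Fintype α] (f : α → β) : ℕ :=
  ∑ p, ∑ q, inversionIndicator f p q

theorem sum_sum_eq_add_sum_compl {ι M : Type*} [Fintype ι] [DecidableEq ι] [AddCommMonoid M]
    (s : Finset ι) (F : ι → ι → M) :
    ∑ p, ∑ q, F p q =
      ∑ p ∈ s, ∑ q ∈ s, F p q + ∑ k ∈ sᶜ, ∑ p ∈ s, (F p k + F k p) +
        ∑ p ∈ sᶜ, ∑ q ∈ sᶜ, F p q := by
  simp only [← sum_add_sum_compl s, sum_add_distrib]
  rw [sum_comm (s := sᶜ) (t := s) (f := fun k p => F p k)]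
  abel

theorem inversionIndicator_comp_swap_of_ne {p q : α} (hpi : p ≠ i) (hpj : p ≠ j)
    (hqi : q ≠ i) (hqj : q ≠ j) :
    inversionIndicator (f ∘ swap i j) p q = inversionIndicator f p q := by
  simp only [inversionIndicator, Function.comp_apply, swap_apply_of_ne_of_ne hpi hpj,
    swap_apply_of_ne_of_ne hqi hqj]

theorem sum_inversionIndicator_pair_comp_swap (hij : i < j) (hfij : f i < f j) :
    ∑ p ∈ {i, j}, ∑ q ∈ {i, j}, inversionIndicator (f ∘ swap i j) p q =
      ∑ p ∈ {i, j}, ∑ q ∈ {i, j}, inversionIndicator f p q + 1 := by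
  simp [sum_pair hij.ne, inversionIndicator, hij, hfij, hij.not_gt, hfij.not_gt]

-- For `k` outside the interval `(i, j)` the pairs `{i, k}` and `{j, k}` trade their statuses.
-- Inside it, both become inversions if `f k` lies between `f i` and `f j`, and otherwise exactly
-- one of them is an inversion, both before and after the swap.
theorem sum_inversionIndicator_comp_swap_of_ne (hf : f.Injective) (hij : i < j)
    (hfij : f i < f j) (hki : k ≠ i) (hkj : k ≠ j) :
    ∑ p ∈ {i, j}, (inversionIndicator (f ∘ swap i j) p k +
        inversionIndicator (f ∘ swap i j) k p) =
      ∑ p ∈ {i, j}, (inversionIndicator f p k + inversionIndicator f k p) +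
        if k ∈ Set.Ioo i j ∧ f k ∈ Set.Ioo (f i) (f j) then 2 else 0 := by
  have hfi : f k ≠ f i := hf.ne hki
  have hfj : f k ≠ f j := hf.ne hkj
  simp only [sum_pair hij.ne, inversionIndicator, Function.comp_apply, swap_apply_left,
    swap_apply_right, swap_apply_of_ne_of_ne hki hkj, Set.mem_Ioo]
  rcases hki.lt_or_gt with hk | hk
  · simp only [hk, hk.not_gt, hk.trans hij, (hk.trans hij).not_gt, false_and, true_and, if_false]
    omega
  rcases hkj.lt_or_gt with hk' | hk'
  · simp only [hk, hk.not_gt, hk', hk'.not_gt, false_and, true_and, if_false]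
    grind
  · simp only [hk, hk.not_gt, hk', hk'.not_gt, false_and, true_and, and_false, if_false]
    omega

variable [Fintype α]

theorem sum_compl_sum_inversionIndicator_comp_swap (hf : f.Injective) (hij : i < j)
    (hfij : f i < f j) :
    ∑ k ∈ {i, j}ᶜ, ∑ p ∈ {i, j}, (inversionIndicator (f ∘ swap i j) p k +
        inversionIndicator (f ∘ swap i j) k p) =
      ∑ k ∈ {i, j}ᶜ, ∑ p ∈ {i, j}, (inversionIndicator f p k + inversionIndicator f k p) +
        2 * #{k | k ∈ Set.Ioo i j ∧ f k ∈ Set.Ioo (f i) (f j)} := by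
  have hbox : ∑ k ∈ {i, j}ᶜ, (if k ∈ Set.Ioo i j ∧ f k ∈ Set.Ioo (f i) (f j) then 2 else 0) =
      2 * #{k | k ∈ Set.Ioo i j ∧ f k ∈ Set.Ioo (f i) (f j)} := by
    rw [sum_subset (subset_univ _) (by grind [mem_compl]), ← sum_filter, sum_const,
      smul_eq_mul, mul_comm]
  rw [← hbox, ← sum_add_distrib]
  refine sum_congr rfl fun k hk => ?_
  simp only [mem_compl, mem_insert, mem_singleton, not_or] at hk
  exact sum_inversionIndicator_comp_swap_of_ne hf hij hfij hk.1 hk.2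

theorem inversionCount_comp_swap (hf : f.Injective) (hij : i < j) (hfij : f i < f j) :
    inversionCount (f ∘ swap i j) =
      inversionCount f + 1 + 2 * #{k | k ∈ Set.Ioo i j ∧ f k ∈ Set.Ioo (f i) (f j)} := by
  have hrest : ∑ p ∈ {i, j}ᶜ, ∑ q ∈ {i, j}ᶜ, inversionIndicator (f ∘ swap i j) p q =
      ∑ p ∈ {i, j}ᶜ, ∑ q ∈ {i, j}ᶜ, inversionIndicator f p q := by
    refine sum_congr rfl fun p hp => sum_congr rfl fun q hq => ?_
    simp only [mem_compl, mem_insert, mem_singleton, not_or] at hp hq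
    exact inversionIndicator_comp_swap_of_ne hp.1 hp.2 hq.1 hq.2
  rw [inversionCount, inversionCount, sum_sum_eq_add_sum_compl {i, j},
    sum_sum_eq_add_sum_compl {i, j} (inversionIndicator f), hrest,
    sum_inversionIndicator_pair_comp_swap hij hfij,
    sum_compl_sum_inversionIndicator_comp_swap hf hij hfij]
  ring

theorem inversionCount_comp_swap_eq_add_one_iff (hf : f.Injective) (hij : i < j)
    (hfij : f i < f j) :
    inversionCount (f ∘ swap i j) = inversionCount f + 1 ↔
      ∀ k ∈ Set.Ioo i j, f k ∉ Set.Ioo (f i) (f j) := by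
  simp [inversionCount_comp_swap hf hij hfij, filter_eq_empty_iff]

theorem inversionCount_eq_comp_swap_add_one_iff (hf : f.Injective) (hij : i < j)
    (hfji : f j < f i) :
    inversionCount f = inversionCount (f ∘ swap i j) + 1 ↔
      ∀ k ∈ Set.Ioo i j, f k ∉ Set.Ioo (f j) (f i) := by
  have hswap : (f ∘ swap i j) ∘ swap i j = f := by
    ext k
    simp only [Function.comp_apply, swap_apply_self]
  have hiff := inversionCount_comp_swap_eq_add_one_iff (hf.comp (swap i j).injective) hij
    (by simpa using hfji)
  rw [hswap] at hiff
  rw [hiff]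
  refine forall₂_congr fun k hk => ?_
  simp only [Function.comp_apply, swap_apply_left, swap_apply_right,
    swap_apply_of_ne_of_ne hk.1.ne' hk.2.ne]

end Inversions

theorem transGen_of_inversion {α β : Type*} [Preorder α] [LocallyFiniteOrder α] [Preorder β]
    {f : α → β} {r : β → β → Prop}
    (hr : ∀ i j, i < j → f j < f i → (∀ k ∈ Set.Ioo i j, f k ∉ Set.Ioo (f j) (f i)) →
      r (f i) (f j)) {i j : α} (hij : i < j) (hfji : f j < f i) :
    Relation.TransGen r (f i) (f j) := by
  by_cases hbox : ∀ k ∈ Set.Ioo i j, f k ∉ Set.Ioo (f j) (f i)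
  · exact .single (hr i j hij hfji hbox)
  push Not at hbox
  obtain ⟨k, ⟨hik, hkj⟩, hfjk, hfki⟩ := hbox
  exact (transGen_of_inversion hr hik hfki).trans (transGen_of_inversion hr hkj hfjk)
termination_by #(Ioo i j)
decreasing_by
  · exact card_lt_card ((ssubset_iff_of_subset (Ioo_subset_Ioo_right hkj.le)).2
      ⟨k, mem_Ioo.2 ⟨hik, hkj⟩, right_notMem_Ioo⟩)
  · exact card_lt_card ((ssubset_iff_of_subset (Ioo_subset_Ioo_left hik.le)).2
      ⟨k, mem_Ioo.2 ⟨hik, hkj⟩, left_notMem_Ioo⟩)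

section Permutations

variable {n : ℕ} {w u : Perm (Fin n)} {a b c i j k : Fin n}

theorem invLen_eq_inversionCount (u : Perm (Fin n)) : invLen u = inversionCount u := by
  simp only [invLen, inversionCount, inversionIndicator, card_filter, Fintype.sum_prod_type]

theorem invLen_swap_mul (u : Perm (Fin n)) (i j : Fin n) :
    invLen (swap (u i) (u j) * u) = inversionCount (u ∘ swap i j) := by
  rw [← mul_swap_eq_swap_mul, invLen_eq_inversionCount, Perm.coe_mul]

theorem BruhatLE.of_mul_left {τ v : Perm (Fin n)} (hτ : IsTransposition τ)
    (hlt : invLen v < invLen (τ * v)) (h : BruhatLE (τ * v) w) : BruhatLE v w := by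
  obtain ⟨m, c, hc₀, hcm, hc⟩ := h
  refine ⟨m + 1, fun k => Nat.casesOn k v c, rfl, hcm, ?_⟩
  rintro (_ | k) hk
  · exact ⟨⟨τ, hτ, hc₀⟩, hlt.trans_eq (congrArg invLen hc₀.symm)⟩
  · exact hc k (Nat.lt_of_succ_lt_succ hk)

theorem mk_mem_Etilde_iff :
    (u i, u j) ∈ Etilde w u ↔ i < j ∧ BruhatLE (swap (u i) (u j) * u) w ∧
      |(invLen (swap (u i) (u j) * u) : ℤ) - invLen u| = 1 := by
  simp [Etilde]

theorem notMem_Ioo_of_mem_Etilde (h : (u i, u k) ∈ Etilde w u)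
    (hj : u j ∈ Set.Ioo (u i) (u k)) : j ∉ Set.Ioo i k := by
  intro hjmem
  obtain ⟨hik, -, hlen⟩ := mk_mem_Etilde_iff.1 h
  have huik : u i < u k := hj.1.trans hj.2
  rw [invLen_swap_mul, invLen_eq_inversionCount] at hlen
  have hcover : inversionCount (u ∘ swap i k) = inversionCount u + 1 := by
    have := inversionCount_comp_swap u.injective hik huik
    rw [abs_eq zero_le_one] at hlen
    omega
  exact (inversionCount_comp_swap_eq_add_one_iff u.injective hik huik).1 hcover j hjmem hj

theorem mem_Etilde_of_inversion (hle : BruhatLE u w) (hij : i < j) (hji : u j < u i)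
    (hbox : ∀ k ∈ Set.Ioo i j, u k ∉ Set.Ioo (u j) (u i)) : (u i, u j) ∈ Etilde w u := by
  have hlen : invLen u = invLen (swap (u i) (u j) * u) + 1 := by
    rw [invLen_swap_mul, invLen_eq_inversionCount]
    exact (inversionCount_eq_comp_swap_add_one_iff u.injective hij hji).2 hbox
  have hmul : swap (u i) (u j) * (swap (u i) (u j) * u) = u := swap_mul_self_mul _ _ _
  refine mk_mem_Etilde_iff.2 ⟨hij, ?_, by simp [hlen]⟩
  refine .of_mul_left ⟨u i, u j, hji.ne', rfl⟩ ?_ (hmul.symm ▸ hle)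
  rw [hmul, hlen]
  exact Nat.lt_succ_self _

theorem transGen_Etilde_of_inversion (hle : BruhatLE u w) (hij : i < j) (hji : u j < u i) :
    Relation.TransGen (fun a b => (a, b) ∈ Etilde w u) (u i) (u j) :=
  transGen_of_inversion (fun _ _ => mem_Etilde_of_inversion hle) hij hji

theorem le_of_mem_Eplus_of_mem_Eplus_left (hle : BruhatLE u w) (hb : (a, b) ∈ Eplus w u)
    (hc : (a, c) ∈ Eplus w u) : c ≤ b := by
  obtain ⟨i, rfl⟩ := u.surjective a
  obtain ⟨j, rfl⟩ := u.surjective b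
  obtain ⟨k, rfl⟩ := u.surjective c
  obtain ⟨⟨hij, hred⟩, hab : u i < u j⟩ := hb
  obtain ⟨⟨hik, -⟩, -⟩ := hc
  by_contra! hbc : u j < u k
  have hkj : k < j := by
    have hlt : i < j := (mk_mem_Etilde_iff.1 hij).1
    have hj : j ∉ Set.Ioo i k := notMem_Ioo_of_mem_Etilde hik ⟨hab, hbc⟩
    exact (not_lt.1 fun hjk => hj ⟨hlt, hjk⟩).lt_of_ne (ne_of_apply_ne u hbc.ne')
  exact hred ⟨u k, hik, transGen_Etilde_of_inversion hle hkj hbc⟩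

theorem le_of_mem_Eplus_of_mem_Eplus_right (hle : BruhatLE u w) (ha : (a, c) ∈ Eplus w u)
    (hb : (b, c) ∈ Eplus w u) : b ≤ a := by
  obtain ⟨i, rfl⟩ := u.surjective a
  obtain ⟨j, rfl⟩ := u.surjective b
  obtain ⟨k, rfl⟩ := u.surjective c
  obtain ⟨⟨hik, -⟩, -⟩ := ha
  obtain ⟨⟨hjk, hred⟩, hbc : u j < u k⟩ := hb
  by_contra! hab : u i < u j
  have hji : j < i := by
    have hlt : j < k := (mk_mem_Etilde_iff.1 hjk).1
    have hj : j ∉ Set.Ioo i k := notMem_Ioo_of_mem_Etilde hik ⟨hab, hbc⟩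
    exact (not_lt.1 fun hij => hj ⟨hij, hlt⟩).lt_of_ne (ne_of_apply_ne u hab.ne')
  obtain ⟨d, hjd, hdi⟩ :=
    Relation.TransGen.head'_iff.1 (transGen_Etilde_of_inversion hle hji hab)
  exact hred ⟨d, hjd, .tail' hdi hik⟩

end Permutations

theorem stmt3 {n : ℕ} (hn : 1 ≤ n) (w u : Equiv.Perm (Fin n)) (hle : BruhatLE u w)
    (a b c : Fin n) :
    (((a, b) : Fin n × Fin n) ∈ Eplus w u → ((a, c) : Fin n × Fin n) ∈ Eplus w u → b = c) ∧
    (((a, c) : Fin n × Fin n) ∈ Eplus w u → ((b, c) : Fin n × Fin n) ∈ Eplus w u → a = b) :=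
  ⟨fun hb hc => le_antisymm (le_of_mem_Eplus_of_mem_Eplus_left hle hc hb)
      (le_of_mem_Eplus_of_mem_Eplus_left hle hb hc),
    fun ha hb => le_antisymm (le_of_mem_Eplus_of_mem_Eplus_right hle hb ha)
      (le_of_mem_Eplus_of_mem_Eplus_right hle ha hb)⟩
end
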